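/- For all real x > 0, ln(x + 1/2) - 1/x < ψ(x) < ln(x + e^{-γ}) - 1/x, where ψ is the digamma function and γ is the Euler–Mascheroni constant. -/

import Mathlib

/-- The digamma function ψ = Γ'/Γ, as the derivative of log ∘ Γ. -/
noncomputable def digamma (x : ℝ) : ℝ := deriv (fun y => Real.log (Real.Gamma y)) x

/-!
The function `exp (ψ y) - y` is strictly decreasing on `(0, ∞)`; comparing its values at `x + 1`
and `1` gives the upper bound, since `ψ (x + 1) = ψ x + 1 / x` and `ψ 1 = -γ`. Because `ψ y ≤ log y`
this function is bounded above, so it is enough that `exp ∘ ψ` is strictly convex, which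
amounts to `ψ'² + ψ'' > 0`.

Positivity of a function that vanishes at infinity follows if it strictly decreases along unit
steps. For `ψ'² + ψ''` the unit decrement is `(2 / x²) (ψ' x - 1 / x - 1 / (2 x²))`, and for the
last factor it is `(1 / x - 1 / (x + 1))² / 2`. The lower bound `log (x - 1 / 2) < ψ x` is
obtained in the same way.
-/

open Real Set Filter Topology

lemma tendsto_const_add_natCast_atTop (x : ℝ) : Tendsto (fun n : ℕ ↦ x + n) atTop atTop :=
  tendsto_atTop_add_const_left _ x tendsto_natCast_atTop_atTop

lemma lt_of_forall_add_one_lt_of_tendsto {α : Type*} [TopologicalSpace α] [Preorder α]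
    [OrderClosedTopology α] {f : ℝ → α} {x : ℝ} {l : α} (hf : ∀ y, x ≤ y → f (y + 1) < f y)
    (hl : Tendsto (fun n : ℕ ↦ f (x + n)) atTop (𝓝 l)) : l < f x := by
  have hanti : StrictAnti fun n : ℕ ↦ f (x + n) := strictAnti_nat_of_succ_lt fun n ↦ by
    simpa only [Nat.cast_add_one, add_assoc] using hf (x + n) (by simp)
  calc l ≤ f (x + (1 : ℕ)) := hanti.antitone.le_of_tendsto hl 1
    _ < f x := by simpa using hf x le_rfl

lemma strictAntiOn_Ioi_of_strictConvexOn_of_bddAbove {𝕜 : Type*} [Field 𝕜] [LinearOrder 𝕜]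
    [IsStrictOrderedRing 𝕜] {f : 𝕜 → 𝕜} {a : 𝕜} (hf : StrictConvexOn 𝕜 (Ioi a) f)
    (hb : BddAbove (f '' Ioi a)) : StrictAntiOn f (Ioi a) := by
  intro x hx y hy hxy
  by_contra! hle
  obtain ⟨C, hC⟩ := hb
  have hyz : y < y + 1 := lt_add_one y
  have hz : y + 1 ∈ Ioi a := lt_trans hy hyz
  have hslope : 0 < f (y + 1) - f y := by
    have := hf.slope_strict_mono_adjacent hx hz hxy hyz
    rw [add_sub_cancel_left, div_one] at this
    exact (div_nonneg (sub_nonneg.2 hle) (sub_pos.2 hxy).le).trans_lt this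
  have hCz : 0 < C - f (y + 1) + 1 := by linarith [hC (mem_image_of_mem f hz)]
  -- The line of slope `f (y + 1) - f y` through `(y + 1, f (y + 1))` has height `C + 1` at abscissa
  -- `y + 1 + t`, and `f` lies above it there.
  set t := (C - f (y + 1) + 1) / (f (y + 1) - f y) with ht
  have htpos : 0 < t := div_pos hCz hslope
  have hw : y + 1 + t ∈ Ioi a := lt_trans hz (lt_add_of_pos_right _ htpos)
  have hgrowth := hf.convexOn.slope_mono_adjacent hy hw hyz (lt_add_of_pos_right _ htpos)
  rw [add_sub_cancel_left, div_one, add_sub_cancel_left, le_div_iff₀ htpos, ht,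
    mul_div_cancel₀ _ hslope.ne'] at hgrowth
  linarith [hC (mem_image_of_mem f hw)]

/-- The Hurwitz zeta value `ζ(k, x) = ∑ₙ (x + n)⁻ᵏ` at an integer `k`, through which the derivatives
of the digamma function are expressed. It has the junk value `0` when `k ≤ 1`. -/
noncomputable def hurwitzSum (k : ℕ) (x : ℝ) : ℝ := ∑' n : ℕ, 1 / (x + n) ^ k

lemma summable_one_div_add_nat_pow {k : ℕ} (hk : 1 < k) {x : ℝ} (hx : 0 < x) :
    Summable fun n : ℕ ↦ 1 / (x + n) ^ k := by
  refine ((summable_one_div_nat_add_rpow x k).2 (by exact_mod_cast hk)).congr fun n ↦ ?_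
  rw [abs_of_pos (by positivity), rpow_natCast, add_comm]

lemma hurwitzSum_eq_one_div_pow_add {k : ℕ} (hk : 1 < k) {x : ℝ} (hx : 0 < x) :
    hurwitzSum k x = 1 / x ^ k + hurwitzSum k (x + 1) := by
  simp only [hurwitzSum, (summable_one_div_add_nat_pow hk hx).tsum_eq_zero_add, Nat.cast_zero,
    add_zero, Nat.cast_add_one, add_assoc, add_comm (1 : ℝ)]

lemma tendsto_hurwitzSum_add_nat (k : ℕ) (x : ℝ) :
    Tendsto (fun n : ℕ ↦ hurwitzSum k (x + n)) atTop (𝓝 0) := by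
  refine (tendsto_sum_nat_add fun n : ℕ ↦ 1 / (x + n) ^ k).congr fun n ↦ ?_
  simp only [hurwitzSum, Nat.cast_add, add_assoc, add_comm (n : ℝ)]

lemma hasDerivAt_one_div_add_pow (k : ℕ) {c x : ℝ} (hx : x + c ≠ 0) :
    HasDerivAt (fun y ↦ 1 / (y + c) ^ k) (-k * (1 / (x + c) ^ (k + 1))) x := by
  simp only [one_div, ← zpow_natCast, ← zpow_neg]
  refine ((hasDerivAt_zpow (-k) (x + c) (.inl hx)).comp_add_const x c).congr_deriv ?_
  push_cast
  ring_nf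

lemma hasDerivAt_hurwitzSum {k : ℕ} (hk : 1 < k) {x : ℝ} (hx : 0 < x) :
    HasDerivAt (hurwitzSum k) (-k * hurwitzSum (k + 1) x) x := by
  have hbound : Summable fun n : ℕ ↦ (k : ℝ) * (1 / (x / 2 + n) ^ (k + 1)) :=
    (summable_one_div_add_nat_pow (by lia) (half_pos hx)).mul_left _
  unfold hurwitzSum
  rw [← tsum_mul_left]
  refine hasDerivAt_tsum_of_isPreconnected (g := fun (n : ℕ) (y : ℝ) ↦ 1 / (y + n) ^ k)
    (g' := fun n y ↦ -k * (1 / (y + n) ^ (k + 1))) (t := Ioi (x / 2)) (y₀ := x)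
    hbound isOpen_Ioi isPreconnected_Ioi
    (fun n y (hy : x / 2 < y) ↦ ?_) (fun n y (hy : x / 2 < y) ↦ ?_) (mem_Ioi.2 (half_lt_self hx))
    (summable_one_div_add_nat_pow hk hx) (mem_Ioi.2 (half_lt_self hx))
  all_goals have hy' : 0 < y := (half_pos hx).trans hy
  · exact hasDerivAt_one_div_add_pow k (by positivity)
  · rw [neg_mul, norm_neg, norm_of_nonneg (by positivity)]
    gcongr

lemma hasDerivAt_log_Gamma {x : ℝ} (hx : 0 < x) :
    HasDerivAt (fun y ↦ log (Gamma y)) (digamma x) x := by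
  have hne (m : ℕ) : x ≠ -m := by
    have : (0 : ℝ) ≤ m := m.cast_nonneg
    linarith
  exact ((differentiableAt_Gamma hne).log (Gamma_ne_zero hne)).hasDerivAt

lemma log_Gamma_add_one {x : ℝ} (hx : 0 < x) : log (Gamma (x + 1)) = log (Gamma x) + log x := by
  rw [Gamma_add_one hx.ne', log_mul hx.ne' (Gamma_pos_of_pos hx).ne', add_comm]

lemma digamma_add_one {x : ℝ} (hx : 0 < x) : digamma (x + 1) = digamma x + 1 / x := by
  have hshift := (hasDerivAt_log_Gamma (add_pos hx one_pos)).comp_add_const x 1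
  have hsum := (hasDerivAt_log_Gamma hx).add (hasDerivAt_log hx.ne')
  rw [one_div]
  refine hshift.unique (hsum.congr_of_eventuallyEq ?_)
  filter_upwards [eventually_gt_nhds hx] with y hy using log_Gamma_add_one hy

lemma digamma_add_nat {x : ℝ} (hx : 0 < x) (N : ℕ) :
    digamma (x + N) = digamma x + ∑ n ∈ Finset.range N, 1 / (x + n) := by
  induction N with
  | zero => simp
  | succ N ih =>
    rw [Nat.cast_add_one, ← add_assoc, digamma_add_one (by positivity), ih,
      Finset.sum_range_succ, add_assoc]

lemma digamma_one : digamma 1 = -eulerMascheroniConstant := by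
  simpa using (hasDerivAt_log_Gamma one_pos).unique (hasDerivAt_Gamma_one.log (by simp))

lemma digamma_le_log {x : ℝ} (hx : 0 < x) : digamma x ≤ log x := by
  have hconv : ConvexOn ℝ (Ioi 0) fun y ↦ log (Gamma y) := convexOn_log_Gamma
  have hslope := hconv.le_slope_of_hasDerivAt hx (add_pos hx one_pos) (lt_add_one x)
    (hasDerivAt_log_Gamma hx)
  simpa [slope_def_field, log_Gamma_add_one hx] using hslope

lemma log_le_digamma_add_one {x : ℝ} (hx : 0 < x) : log x ≤ digamma (x + 1) := by
  have hconv : ConvexOn ℝ (Ioi 0) fun y ↦ log (Gamma y) := convexOn_log_Gamma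
  have hslope := hconv.slope_le_of_hasDerivAt hx (add_pos hx one_pos) (lt_add_one x)
    (hasDerivAt_log_Gamma (add_pos hx one_pos))
  simpa [slope_def_field, log_Gamma_add_one hx] using hslope

lemma tendsto_digamma_sub_log : Tendsto (fun x ↦ digamma x - log x) atTop (𝓝 0) := by
  have hlower : Tendsto (fun x : ℝ ↦ -(1 / x)) atTop (𝓝 0) := by
    simpa using (tendsto_inv_atTop_zero (𝕜 := ℝ)).neg
  refine tendsto_of_tendsto_of_tendsto_of_le_of_le' hlower tendsto_const_nhds ?_ ?_
  · filter_upwards [eventually_gt_atTop 0] with x hx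
    linarith [log_le_digamma_add_one hx, digamma_add_one hx]
  · filter_upwards [eventually_gt_atTop 0] with x hx
    exact sub_nonpos.2 (digamma_le_log hx)

lemma tendsto_digamma_sub_log_add (c : ℝ) :
    Tendsto (fun x ↦ digamma x - log (x + c)) atTop (𝓝 0) := by
  simpa using tendsto_digamma_sub_log.sub (tendsto_log_comp_add_sub_log c)

lemma one_div_add_half_lt_log_sub_log {x : ℝ} (hx : 0 < x) :
    1 / (x + 1 / 2) < log (x + 1) - log x := by
  calc 1 / (x + 1 / 2) = 2 * (1 / x) / (1 / x + 2) := by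
        field_simp
        ring
    _ < log (1 + 1 / x) := lt_log_one_add_of_pos (by positivity)
    _ = log (x + 1) - log x := by
        rw [one_add_div hx.ne', log_div (by positivity) hx.ne']

lemma log_sub_half_lt_digamma {x : ℝ} (hx : 1 / 2 < x) : log (x - 1 / 2) < digamma x := by
  rw [← sub_pos]
  refine lt_of_forall_add_one_lt_of_tendsto (f := fun y ↦ digamma y - log (y - 1 / 2))
    (fun y hy ↦ ?_) ?_
  · have hlog := one_div_add_half_lt_log_sub_log (sub_pos.2 (hx.trans_le hy))
    rw [sub_add_cancel] at hlog
    rw [digamma_add_one (by linarith), add_sub_right_comm y]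
    linarith
  · exact (tendsto_digamma_sub_log_add (-(1 / 2))).comp (tendsto_const_add_natCast_atTop x)

lemma summable_one_div_sub_one_div_add_nat {x y : ℝ} (hx : 0 < x) (hy : 0 < y) :
    Summable fun n : ℕ ↦ 1 / (x + n) - 1 / (y + n) := by
  have hmin : 0 < min x y := lt_min hx hy
  refine .of_norm_bounded
    ((summable_one_div_add_nat_pow one_lt_two hmin).mul_left |y - x|) fun n ↦ ?_
  have hxn : min x y + n ≤ x + n := by gcongr; exact min_le_left x y
  have hyn : min x y + n ≤ y + n := by gcongr; exact min_le_right x y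
  calc ‖1 / (x + n) - 1 / (y + n)‖ = |y - x| * (1 / ((x + n) * (y + n))) := by
        rw [div_sub_div _ _ (by positivity) (by positivity), norm_eq_abs, abs_div,
          abs_of_pos (by positivity : 0 < (x + n) * (y + n)), mul_one_div]
        congr 2
        ring
    _ ≤ |y - x| * (1 / (min x y + n) ^ 2) := by
        rw [sq]
        gcongr

lemma tsum_one_div_sub_one_div_add_nat {x y : ℝ} (hx : 0 < x) (hy : 0 < y) :
    ∑' n : ℕ, (1 / (x + n) - 1 / (y + n)) = digamma y - digamma x := by
  refine tendsto_nhds_unique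
    (summable_one_div_sub_one_div_add_nat hx hy).hasSum.tendsto_sum_nat ?_
  have hdiff : Tendsto (fun N : ℕ ↦ digamma (x + N) - digamma (y + N)) atTop (𝓝 0) := by
    simpa [add_comm] using
      ((tendsto_digamma_sub_log_add (-x)).comp (tendsto_const_add_natCast_atTop x)).sub
      ((tendsto_digamma_sub_log_add (-y)).comp (tendsto_const_add_natCast_atTop y))
  have hlim := hdiff.add_const (digamma y - digamma x)
  rw [zero_add] at hlim
  refine hlim.congr fun N ↦ ?_
  rw [digamma_add_nat hx, digamma_add_nat hy, Finset.sum_sub_distrib]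
  ring

lemma hasDerivAt_digamma {x : ℝ} (hx : 0 < x) : HasDerivAt digamma (hurwitzSum 2 x) x := by
  have hseries : HasDerivAt (fun y ↦ ∑' n : ℕ, (1 / (x + n) - 1 / (y + n))) (hurwitzSum 2 x) x := by
    rw [hurwitzSum]
    refine hasDerivAt_tsum_of_isPreconnected (g := fun (n : ℕ) y ↦ 1 / (x + n) - 1 / (y + n))
      (g' := fun n y ↦ 1 / (y + n) ^ 2) (t := Ioi (x / 2)) (y₀ := x)
      (summable_one_div_add_nat_pow one_lt_two (half_pos hx)) isOpen_Ioi isPreconnected_Ioi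
      (fun n y (hy : x / 2 < y) ↦ ?_) (fun n y (hy : x / 2 < y) ↦ ?_) (mem_Ioi.2 (half_lt_self hx))
      (summable_one_div_sub_one_div_add_nat hx hx) (mem_Ioi.2 (half_lt_self hx))
    all_goals have hy' : 0 < y := (half_pos hx).trans hy
    · simpa using (hasDerivAt_one_div_add_pow 1 (by positivity)).const_sub (1 / (x + n))
    · rw [norm_of_nonneg (by positivity)]
      gcongr
  refine (hseries.const_add (digamma x)).congr_of_eventuallyEq ?_
  filter_upwards [eventually_gt_nhds hx] with y hy
  rw [tsum_one_div_sub_one_div_add_nat hx hy, add_sub_cancel]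

lemma one_div_add_one_div_lt_hurwitzSum_two {x : ℝ} (hx : 0 < x) :
    1 / x + 1 / (2 * x ^ 2) < hurwitzSum 2 x := by
  rw [← sub_pos]
  refine lt_of_forall_add_one_lt_of_tendsto
    (f := fun y ↦ hurwitzSum 2 y - (1 / y + 1 / (2 * y ^ 2))) (fun y hy ↦ ?_) ?_
  · have hy' : 0 < y := hx.trans_le hy
    have hgap : 0 < (1 / y - 1 / (y + 1)) ^ 2 / 2 := by
      have := one_div_lt_one_div_of_lt hy' (lt_add_one y)
      have := sub_pos.2 this
      positivity
    have hdecrement : 1 / y ^ 2 - (1 / y + 1 / (2 * y ^ 2))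
        + (1 / (y + 1) + 1 / (2 * (y + 1) ^ 2)) = (1 / y - 1 / (y + 1)) ^ 2 / 2 := by
      field_simp
      ring
    rw [hurwitzSum_eq_one_div_pow_add one_lt_two hy']
    linarith
  · have hinv : Tendsto (fun n : ℕ ↦ (x + n)⁻¹) atTop (𝓝 0) :=
      tendsto_inv_atTop_zero.comp (tendsto_const_add_natCast_atTop x)
    simpa [mul_comm] using
      (tendsto_hurwitzSum_add_nat 2 x).sub (hinv.add ((hinv.pow 2).const_mul 2⁻¹))

lemma two_mul_hurwitzSum_three_lt_hurwitzSum_two_sq {x : ℝ} (hx : 0 < x) :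
    2 * hurwitzSum 3 x < hurwitzSum 2 x ^ 2 := by
  rw [← sub_pos]
  refine lt_of_forall_add_one_lt_of_tendsto
    (f := fun y ↦ hurwitzSum 2 y ^ 2 - 2 * hurwitzSum 3 y) (fun y hy ↦ ?_) ?_
  · have hy' : 0 < y := hx.trans_le hy
    have htwo := hurwitzSum_eq_one_div_pow_add one_lt_two hy'
    have hthree := hurwitzSum_eq_one_div_pow_add (k := 3) (by norm_num) hy'
    have hgap : 0 < 2 / y ^ 2 * (hurwitzSum 2 y - (1 / y + 1 / (2 * y ^ 2))) :=
      mul_pos (by positivity) (sub_pos.2 (one_div_add_one_div_lt_hurwitzSum_two hy'))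
    have hdecrement : hurwitzSum 2 y ^ 2 - 2 * hurwitzSum 3 y
        - (hurwitzSum 2 (y + 1) ^ 2 - 2 * hurwitzSum 3 (y + 1))
          = 2 / y ^ 2 * (hurwitzSum 2 y - (1 / y + 1 / (2 * y ^ 2))) := by
      rw [htwo, hthree]
      field_simp
      ring
    linarith
  · simpa using
      ((tendsto_hurwitzSum_add_nat 2 x).pow 2).sub ((tendsto_hurwitzSum_add_nat 3 x).const_mul 2)

lemma strictConvexOn_exp_digamma : StrictConvexOn ℝ (Ioi 0) fun x ↦ exp (digamma x) := by
  have hderiv {x : ℝ} (hx : 0 < x) := (hasDerivAt_digamma hx).exp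
  have hderiv2 {x : ℝ} (hx : 0 < x) := (hderiv hx).mul (hasDerivAt_hurwitzSum one_lt_two hx)
  have hmono : StrictMonoOn (fun x ↦ exp (digamma x) * hurwitzSum 2 x) (Ioi 0) := by
    refine strictMonoOn_of_deriv_pos (convex_Ioi 0)
      (fun x hx ↦ (hderiv2 hx).continuousAt.continuousWithinAt) fun x hx ↦ ?_
    rw [interior_Ioi] at hx
    calc 0 < exp (digamma x) * (hurwitzSum 2 x ^ 2 - 2 * hurwitzSum 3 x) :=
          mul_pos (exp_pos _) (sub_pos.2 (two_mul_hurwitzSum_three_lt_hurwitzSum_two_sq hx))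
      _ = deriv (fun x ↦ exp (digamma x) * hurwitzSum 2 x) x := by
          refine Eq.trans ?_ (hderiv2 hx).deriv.symm
          push_cast
          ring
  refine StrictMonoOn.strictConvexOn_of_deriv (convex_Ioi 0)
    (fun x hx ↦ (hderiv hx).continuousAt.continuousWithinAt) ?_
  rw [interior_Ioi]
  exact hmono.congr fun x hx ↦ (hderiv hx).deriv.symm

lemma strictAntiOn_exp_digamma_sub_id : StrictAntiOn (fun x ↦ exp (digamma x) - x) (Ioi 0) := by
  refine strictAntiOn_Ioi_of_strictConvexOn_of_bddAbove
    (strictConvexOn_exp_digamma.sub_concaveOn (concaveOn_id (convex_Ioi 0))) ⟨0, ?_⟩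
  rintro _ ⟨x, hx, rfl⟩
  exact sub_nonpos.2 ((le_log_iff_exp_le hx).1 (digamma_le_log hx))

theorem qi_guo_digamma_bounds (x : ℝ) (hx : 0 < x) :
    Real.log (x + 1/2) - 1/x < digamma x ∧
    digamma x < Real.log (x + Real.exp (-Real.eulerMascheroniConstant)) - 1/x := by
  rw [sub_lt_iff_lt_add, lt_sub_iff_add_lt, ← digamma_add_one hx]
  constructor
  · calc log (x + 1 / 2) = log (x + 1 - 1 / 2) := by ring_nf
      _ < digamma (x + 1) := log_sub_half_lt_digamma (by linarith)
  · have hanti := strictAntiOn_exp_digamma_sub_id (mem_Ioi.2 one_pos)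
      (mem_Ioi.2 (add_pos hx one_pos)) (lt_add_of_pos_left 1 hx)
    simp only [digamma_one] at hanti
    rw [lt_log_iff_exp_lt (by positivity)]
    linarith
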